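/- arXiv:2408.04148 — 2 statements merged into one kernel-verified Lean document; each statement's English description precedes it below -/
import Mathlib

section
/- Let f : [0,∞) → [0,∞) be a bounded function that is either antitone or continuous, and suppose that for every α > 0 and every ε > 0 there exists M > 0 such that ξ^(−α) ≤ ε·f(ξ) for all ξ ≥ M. Then for every natural number n ≥ 1 the power f^n again satisfies this condition, and consequently there exist a Borel probability measure μₙ on ℝ with μₙ(ℝ \ 𝕃) = 0 and constants C > 0, M' > 0 such that |μ̂ₙ(ξ)| ≤ C·f(|ξ|)^n for all |ξ| ≥ M'. -/
open MeasureTheory Filter Set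

/-- The Fourier transform of a measure on `ℝ`: `μ̂(ξ) = ∫ e^(−2πiξx) dμ(x)`. -/
noncomputable def fourierT (μ : Measure ℝ) (ξ : ℝ) : ℂ :=
  ∫ x, Complex.exp (((-2 * Real.pi * ξ * x : ℝ) : ℂ) * Complex.I) ∂μ

/-!
Every power of a function dominating all negative powers of `ξ` dominates them too, so it is enough
to find, for one such function `g`, a probability measure on the Liouville numbers whose Fourier
transform is eventually bounded by `g |ξ|`.

The measure is the law of a sum of independent random fractions `a / q`. In the `k`-th one, `q` is
a random prime in `(N k, N k ^ 3]`, and `a` is uniform on an initial segment of length about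
`q / l k`. If the scales `l 0 ≤ N 0`, `l 1 ≤ N 1`, … grow fast enough, the partial sums approximate
the sum so well that it is always a Liouville number. Its characteristic function is dominated by
that of each single fraction, and the `k`-th one takes care of `l k ^ 2 ≤ |ξ| ≤ l (k + 1) ^ 2`. For
fixed `q`, averaging over `a` gives a geometric sum, which is small unless `ξ` is close to a
multiple of `q`. For `|ξ| ≤ N k / 2` no nonzero multiple is close. For larger `|ξ|`, a nonzero
integer of size at most `N k ^ j` has at most `j` prime factors greater than `N k`, so only few of
the at least `N k` admissible primes have a multiple close to `ξ`.
-/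

open ProbabilityTheory
open scoped ENNReal

section SlowDecay

/-- A function on the half-line that tends to zero, if at all, more slowly than every negative
power. No constant `ε` is needed in front of `f ξ`, since `α` is arbitrary: see
`DominatesNegRpow.eventually_le_mul`. -/
def DominatesNegRpow (f : ℝ → ℝ) : Prop :=
  ∀ α > (0 : ℝ), ∀ᶠ ξ in atTop, ξ ^ (-α) ≤ f ξ

variable {f : ℝ → ℝ}

lemma DominatesNegRpow.eventually_le_mul (hf : DominatesNegRpow f) {α ε : ℝ} (hα : 0 < α)
    (hε : 0 < ε) : ∀ᶠ ξ in atTop, ξ ^ (-α) ≤ ε * f ξ := by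
  filter_upwards [hf (α / 2) (half_pos hα), eventually_gt_atTop 0,
    (tendsto_rpow_neg_atTop (half_pos hα)).eventually_le_const hε] with ξ hfξ hξ hεξ
  calc ξ ^ (-α) = ξ ^ (-(α / 2)) * ξ ^ (-(α / 2)) := by rw [← Real.rpow_add hξ]; ring_nf
    _ ≤ ε * f ξ := by gcongr

lemma dominatesNegRpow_iff : DominatesNegRpow f ↔ ∀ α > (0 : ℝ), ∀ ε > (0 : ℝ), ∃ M > (0 : ℝ),
    ∀ ξ, M ≤ ξ → ξ ^ (-α) ≤ ε * f ξ := by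
  refine ⟨fun hf α hα ε hε ↦ ?_, fun hf α hα ↦ ?_⟩
  · exact ((eventually_gt_atTop 0).and
      (eventually_forall_ge_atTop.2 (hf.eventually_le_mul hα hε))).exists
  · obtain ⟨M, -, hM⟩ := hf α hα 1 one_pos
    filter_upwards [eventually_ge_atTop M] with ξ hξ
    simpa only [one_mul] using hM ξ hξ

lemma DominatesNegRpow.pow (hf : DominatesNegRpow f) (n : ℕ) :
    DominatesNegRpow fun ξ ↦ f ξ ^ n := by
  intro α hα
  filter_upwards [hf (α / (n + 1)) (by positivity), eventually_ge_atTop 1] with ξ hfξ hξ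
  have hξ₀ : 0 ≤ ξ := zero_le_one.trans hξ
  have hexp : -α ≤ -(α / (n + 1)) * n := by
    rw [neg_mul, neg_le_neg_iff, div_mul_eq_mul_div, div_le_iff₀ (by positivity)]
    nlinarith
  calc ξ ^ (-α) ≤ ξ ^ (-(α / (n + 1)) * n) := Real.rpow_le_rpow_of_exponent_le hξ hexp
    _ = (ξ ^ (-(α / (n + 1)))) ^ n := Real.rpow_mul_natCast hξ₀ _ n
    _ ≤ f ξ ^ n := by gcongr

end SlowDecay

section IndependentSums

variable {ι E Ω : Type*} [Countable ι] [NormedAddCommGroup E] [InnerProductSpace ℝ E]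
  [CompleteSpace E] [SecondCountableTopology E] [MeasurableSpace E] [BorelSpace E]
  {mΩ : MeasurableSpace Ω} {P : Measure Ω}

lemma tendsto_charFun_map_sum_of_ae_summable [IsProbabilityMeasure P] {X : ι → Ω → E}
    (hX : ∀ i, AEMeasurable (X i) P) (hsum : ∀ᵐ ω ∂P, Summable fun i ↦ X i ω) (t : E) :
    Tendsto (fun s : Finset ι ↦ charFun (P.map fun ω ↦ ∑ i ∈ s, X i ω) t) atTop
      (nhds (charFun (P.map fun ω ↦ ∑' i, X i ω) t)) := by
  have htendsto := tendstoInDistribution_of_ae_tendsto (l := atTop)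
    (X := fun (s : Finset ι) ω ↦ ∑ i ∈ s, X i ω) (by fun_prop) (AEMeasurable.tsum hX)
    (hsum.mono fun ω hω ↦ hω.hasSum)
  simp_rw [charFun_eq_integral_innerProbChar]
  exact (ProbabilityMeasure.tendsto_iff_forall_integral_rclike_tendsto ℂ).1
    htendsto.tendsto (BoundedContinuousFunction.innerProbChar t)

lemma norm_charFun_map_tsum_le {X : ι → Ω → E} (hindep : iIndepFun X P)
    (hX : ∀ i, AEMeasurable (X i) P) (hsum : ∀ᵐ ω ∂P, Summable fun i ↦ X i ω) (k : ι) (t : E) :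
    ‖charFun (P.map fun ω ↦ ∑' i, X i ω) t‖ ≤ ‖charFun (P.map (X k)) t‖ := by
  classical
  have := hindep.isProbabilityMeasure
  refine le_of_tendsto (tendsto_charFun_map_sum_of_ae_summable hX hsum t).norm ?_
  filter_upwards [eventually_ge_atTop {k}] with s hs
  rw [(hindep.restrict s).charFun_map_fun_finsetSum_eq_prod fun i _ ↦ hX i, Finset.prod_apply,
    norm_prod, ← Finset.mul_prod_erase s _ (Finset.singleton_subset_iff.1 hs)]
  refine mul_le_of_le_one_right (norm_nonneg _)
    (Finset.prod_le_one (fun _ _ ↦ norm_nonneg _) fun i _ ↦ ?_)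
  have := Measure.isProbabilityMeasure_map (hX i)
  exact norm_charFun_le_one t

lemma exists_ae_mem_forall_norm_charFun_le (ν : ι → Measure E) [∀ i, IsProbabilityMeasure (ν i)]
    {s : ι → Set E} (hs : ∀ i, ∀ᵐ x ∂ν i, x ∈ s i) {T : Set E} (hT : MeasurableSet T)
    (hsum : ∀ x : ι → E, (∀ i, x i ∈ s i) → Summable x ∧ ∑' i, x i ∈ T) :
    ∃ μ : Measure E, IsProbabilityMeasure μ ∧ (∀ᵐ x ∂μ, x ∈ T) ∧
      ∀ i t, ‖charFun μ t‖ ≤ ‖charFun (ν i) t‖ := by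
  obtain ⟨Ω, _, P, X, hX, hlaw, hindep, _⟩ := exists_hasLaw_indepFun (fun _ : ι ↦ E) ν
  have hXs : ∀ᵐ ω ∂P, ∀ i, X i ω ∈ s i := ae_all_iff.2 fun i ↦
    ae_of_ae_map (hX i).aemeasurable ((hlaw i).map_eq ▸ hs i)
  have hmeas : AEMeasurable (fun ω ↦ ∑' i, X i ω) P :=
    AEMeasurable.tsum fun i ↦ (hX i).aemeasurable
  refine ⟨P.map fun ω ↦ ∑' i, X i ω, Measure.isProbabilityMeasure_map hmeas,
    (ae_map_iff hmeas hT).2 (hXs.mono fun ω hω ↦ (hsum _ hω).2), fun i t ↦ ?_⟩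
  rw [← (hlaw i).map_eq]
  exact norm_charFun_map_tsum_le hindep (fun i ↦ (hX i).aemeasurable)
    (hXs.mono fun ω hω ↦ (hsum _ hω).1) i t

end IndependentSums

section Average

variable {ι α : Type*} [MeasurableSpace α] {s : Finset ι} {μ : ι → Measure α}

/-- The law of a sample from `μ i`, where `i` is uniform in `s`. -/
noncomputable def averageMeasure (s : Finset ι) (μ : ι → Measure α) : Measure α :=
  (s.card : ℝ≥0∞)⁻¹ • ∑ i ∈ s, μ i

lemma isProbabilityMeasure_averageMeasure (hs : s.Nonempty)
    (hμ : ∀ i ∈ s, IsProbabilityMeasure (μ i)) : IsProbabilityMeasure (averageMeasure s μ) := by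
  constructor
  have hmass : ∑ i ∈ s, μ i univ = s.card := by
    rw [Finset.sum_congr rfl fun i hi ↦ (hμ i hi).measure_univ, Finset.sum_const, nsmul_one]
  rw [averageMeasure, Measure.smul_apply, Measure.finsetSum_apply, hmass, smul_eq_mul,
    ENNReal.inv_mul_cancel (by simpa using hs.ne_empty) (ENNReal.natCast_ne_top _)]

lemma ae_averageMeasure {p : α → Prop} (hp : ∀ i ∈ s, ∀ᵐ x ∂μ i, p x) :
    ∀ᵐ x ∂averageMeasure s μ, p x :=
  Measure.ae_smul_measure (ae_finsetSum_measure_iff.2 hp) _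

lemma integral_averageMeasure {E : Type*} [NormedAddCommGroup E] [NormedSpace ℝ E] {g : α → E}
    (hg : ∀ i ∈ s, Integrable g (μ i)) :
    ∫ x, g x ∂averageMeasure s μ = (s.card : ℝ)⁻¹ • ∑ i ∈ s, ∫ x, g x ∂μ i := by
  rw [averageMeasure, integral_smul_measure, integral_finsetSum_measure hg, ENNReal.toReal_inv,
    ENNReal.toReal_natCast]

end Average

section FourierTransform

lemma fourierT_eq_charFun (μ : Measure ℝ) (ξ : ℝ) :
    fourierT μ ξ = charFun μ (-2 * Real.pi * ξ) := by
  rw [fourierT, charFun_apply_real]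
  push_cast
  rfl

lemma norm_fourierT_le_one (μ : Measure ℝ) [IsProbabilityMeasure μ] (ξ : ℝ) :
    ‖fourierT μ ξ‖ ≤ 1 := by
  rw [fourierT_eq_charFun]
  exact norm_charFun_le_one _

lemma norm_fourierT_averageMeasure_le {ι : Type*} {s : Finset ι} {μ : ι → Measure ℝ}
    (hμ : ∀ i ∈ s, IsFiniteMeasure (μ i)) (ξ : ℝ) :
    ‖fourierT (averageMeasure s μ) ξ‖ ≤ (s.card : ℝ)⁻¹ * ∑ i ∈ s, ‖fourierT (μ i) ξ‖ := by
  have hint : ∀ i ∈ s, Integrable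
      (fun x : ℝ ↦ Complex.exp (((-2 * Real.pi * ξ * x : ℝ) : ℂ) * Complex.I)) (μ i) := by
    intro i hi
    have := hμ i hi
    exact Integrable.of_bound (by fun_prop) 1
      (Eventually.of_forall fun x ↦ (Complex.norm_exp_ofReal_mul_I _).le)
  rw [fourierT, integral_averageMeasure hint, norm_smul, norm_inv, RCLike.norm_natCast]
  gcongr
  exact norm_sum_le _ _

end FourierTransform

section PrimeDenominators

/-- The primes in `(N, N ^ 3]`, the denominators available at scale `N`. The exponent `3` leaves
room for a crude form of Chebyshev's bound to produce at least `N` of them. -/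
def primeDenominators (N : ℕ) : Finset ℕ := {q ∈ Finset.Ioc N (N ^ 3) | q.Prime}

variable {N q : ℕ}

lemma mem_primeDenominators : q ∈ primeDenominators N ↔ (N < q ∧ q ≤ N ^ 3) ∧ q.Prime := by
  simp only [primeDenominators, Finset.mem_filter, Finset.mem_Ioc]

lemma two_mul_le_primeCounting_cube (hN : 12 ≤ N) : 2 * N ≤ Nat.primeCounting (N ^ 3) := by
  have hNr : (12 : ℝ) ≤ N := by exact_mod_cast hN
  have hlogN_pos : 0 < Real.log N := Real.log_pos (by linarith)
  have hlogN : Real.log N ≤ N - 1 := Real.log_le_sub_one_of_pos (by linarith)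
  have hlog_succ : Real.log ((N : ℝ) ^ 3 + 1) ≤ 3 * N := by
    calc Real.log ((N : ℝ) ^ 3 + 1) ≤ Real.log (((N : ℝ) + 1) ^ 3) :=
          Real.log_le_log (by positivity) (by nlinarith)
      _ = 3 * Real.log ((N : ℝ) + 1) := by rw [Real.log_pow]; norm_num
      _ ≤ 3 * N := by
          have := Real.log_le_sub_one_of_pos (by linarith : (0 : ℝ) < N + 1)
          linarith
  have hpi := Chebyshev.pi_ge (N ^ 3)
  push_cast at hpi
  rw [Real.log_pow, Nat.cast_ofNat] at hpi
  have hgoal : 2 * (N : ℝ) ≤ (N ^ 3 * Real.log 2 - Real.log (N ^ 3 + 1)) / (3 * Real.log N) := by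
    rw [le_div_iff₀ (by positivity)]
    have hlog_two : (1 / 2 : ℝ) ≤ Real.log 2 := by linarith [Real.log_two_gt_d9]
    calc 2 * (N : ℝ) * (3 * Real.log N) ≤ 2 * N * (3 * (N - 1)) := by gcongr
      _ ≤ N ^ 3 * (1 / 2) - 3 * N := by nlinarith [sq_nonneg (N : ℝ)]
      _ ≤ N ^ 3 * Real.log 2 - Real.log (N ^ 3 + 1) := by gcongr
  exact_mod_cast hgoal.trans hpi

lemma le_card_primeDenominators (hN : 12 ≤ N) : N ≤ (primeDenominators N).card := by
  have hsub : Nat.primesLE (N ^ 3) ⊆ primeDenominators N ∪ Finset.Ioc 0 N := by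
    intro p hp
    obtain ⟨hpN, hp⟩ := Nat.mem_primesLE.1 hp
    rw [Finset.mem_union, mem_primeDenominators, Finset.mem_Ioc]
    have := hp.pos
    grind
  have hcard := (Finset.card_le_card hsub).trans (Finset.card_union_le _ _)
  rw [Nat.primesLE_card_eq_primeCounting, Nat.card_Ioc] at hcard
  have := two_mul_le_primeCounting_cube hN
  omega

lemma primeDenominators_nonempty (hN : 12 ≤ N) : (primeDenominators N).Nonempty :=
  Finset.card_pos.1 ((by omega : 0 < N).trans_le (le_card_primeDenominators hN))

end PrimeDenominators

section NearDivisors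

variable {P : Finset ℕ} {N j : ℕ}

lemma card_filter_dvd_le (hP : ∀ p ∈ P, p.Prime) (hPN : ∀ p ∈ P, N ≤ p) (hN : 1 < N)
    {t : ℕ} (ht₀ : t ≠ 0) (ht : t ≤ N ^ j) : {p ∈ P | p ∣ t}.card ≤ j := by
  have hprod : ∏ p ∈ P with p ∣ t, p ∣ t := Finset.prod_primes_dvd t
    (fun p hp ↦ (hP p (Finset.mem_filter.1 hp).1).prime) fun p hp ↦ (Finset.mem_filter.1 hp).2
  refine (Nat.pow_le_pow_iff_right hN).1 ?_
  calc N ^ {p ∈ P | p ∣ t}.card ≤ ∏ p ∈ P with p ∣ t, p :=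
        Finset.pow_card_le_prod _ _ _ fun p hp ↦ hPN p (Finset.mem_filter.1 hp).1
    _ ≤ t := Nat.le_of_dvd (Nat.pos_of_ne_zero ht₀) hprod
    _ ≤ N ^ j := ht

open scoped Classical in
-- A near-divisor of `ξ` divides one of the at most `2 * s + 1` integers at distance `≤ s` from `ξ`.
lemma card_filter_exists_abs_sub_lt_le (hP : ∀ p ∈ P, p.Prime) (hPN : ∀ p ∈ P, N ≤ p)
    (hN : 1 < N) {ξ : ℝ} {s : ℕ} (hs : s < |ξ|) (hξ : |ξ| + s ≤ (N : ℝ) ^ j) :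
    (P.filter fun p : ℕ ↦ ∃ m : ℤ, |ξ - m * p| < s).card ≤ (2 * s + 1) * j := by
  have hsub : (P.filter fun p : ℕ ↦ ∃ m : ℤ, |ξ - m * p| < s) ⊆
      (Finset.Icc ⌈ξ - s⌉ ⌊ξ + s⌋).biUnion fun t ↦ {p ∈ P | p ∣ t.natAbs} := by
    intro p hp
    obtain ⟨hp, m, hm⟩ := Finset.mem_filter.1 hp
    rw [abs_lt] at hm
    refine Finset.mem_biUnion.2 ⟨m * p, Finset.mem_Icc.2 ⟨Int.ceil_le.2 ?_, Int.le_floor.2 ?_⟩,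
      Finset.mem_filter.2 ⟨hp, ?_⟩⟩
    · push_cast; linarith
    · push_cast; linarith
    · exact Int.natCast_dvd.1 (dvd_mul_left _ _)
  have hcard : (Finset.Icc ⌈ξ - s⌉ ⌊ξ + s⌋).card ≤ 2 * s + 1 := by
    have hlen : (⌊ξ + s⌋ : ℝ) - ⌈ξ - s⌉ ≤ 2 * s := by
      linarith [Int.le_ceil (ξ - s), Int.floor_le (ξ + s)]
    rw [Int.card_Icc]
    have : ⌊ξ + s⌋ - ⌈ξ - s⌉ ≤ 2 * s := by exact_mod_cast hlen
    omega
  refine (Finset.card_le_card hsub).trans <| (Finset.card_biUnion_le_card_mul _ _ j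
    fun t ht ↦ ?_).trans (Nat.mul_le_mul_right j hcard)
  rw [Finset.mem_Icc, Int.ceil_le, Int.le_floor] at ht
  have htξ : |(t : ℝ) - ξ| ≤ s := abs_le.2 ⟨by linarith, by linarith⟩
  refine card_filter_dvd_le hP hPN hN (Int.natAbs_ne_zero.2 ?_) ?_
  · rintro rfl
    rw [Int.cast_zero, zero_sub, abs_neg] at htξ
    exact htξ.not_gt hs
  · have ht_le : |(t : ℝ)| ≤ (N : ℝ) ^ j := by linarith [abs_sub_abs_le_abs_sub (t : ℝ) ξ]
    rw [← Int.cast_abs, ← Nat.cast_natAbs] at ht_le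
    exact_mod_cast ht_le

end NearDivisors

section ExponentialSums

lemma norm_geom_sum_le_of_norm_eq_one {z : ℂ} (hz : ‖z‖ = 1) (hz₁ : z ≠ 1) (A : ℕ) :
    ‖∑ a ∈ Finset.range A, z ^ a‖ ≤ 2 / ‖z - 1‖ := by
  rw [geom_sum_eq hz₁, norm_div]
  gcongr
  calc ‖z ^ A - 1‖ ≤ ‖z ^ A‖ + ‖(1 : ℂ)‖ := norm_sub_le _ _
    _ = 2 := by rw [norm_pow, hz, one_pow, norm_one, one_add_one_eq_two]

lemma four_mul_abs_sub_round_le_norm_exp_sub_one (θ : ℝ) :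
    4 * |θ - round θ| ≤ ‖Complex.exp (Complex.I * ((-2 * Real.pi * θ : ℝ) : ℂ)) - 1‖ := by
  have hhalf : |Real.pi * (θ - round θ)| ≤ Real.pi / 2 := by
    rw [abs_mul, abs_of_pos Real.pi_pos]
    nlinarith [Real.pi_pos, abs_sub_round θ]
  have hsin : |Real.sin (-2 * Real.pi * θ / 2)| = |Real.sin (Real.pi * (θ - round θ))| := by
    have harg : -2 * Real.pi * θ / 2 = -(Real.pi * (θ - round θ) + round θ * Real.pi) := by ring
    rw [harg, Real.sin_neg, abs_neg, Real.sin_add_int_mul_pi, abs_mul, abs_zpow, abs_neg,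
      abs_one, one_zpow, one_mul]
  rw [Complex.norm_exp_I_mul_ofReal_sub_one, norm_mul, Real.norm_ofNat, Real.norm_eq_abs, hsin]
  calc 4 * |θ - round θ| = 2 * (2 / Real.pi * |Real.pi * (θ - round θ)|) := by
        rw [abs_mul, abs_of_pos Real.pi_pos]
        field_simp
        ring
    _ ≤ 2 * |Real.sin (Real.pi * (θ - round θ))| := by
        gcongr
        exact Real.mul_abs_le_abs_sin hhalf

variable {q : ℕ} {ξ T : ℝ}

lemma norm_sum_exp_le (hq : 0 < q) (hT : 0 < T) (hξ : ∀ m : ℤ, T ≤ |ξ - m * q|) (A : ℕ) :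
    ‖∑ a ∈ Finset.range A, Complex.exp (((-2 * Real.pi * ξ * (((a + 1 : ℕ) : ℝ) / q) : ℝ) : ℂ) *
      Complex.I)‖ ≤ q / (2 * T) := by
  have hq₀ : (0 : ℝ) < q := by exact_mod_cast hq
  set z : ℂ := Complex.exp (Complex.I * ((-2 * Real.pi * (ξ / q) : ℝ) : ℂ)) with hz
  have hz_norm : ‖z‖ = 1 := by rw [hz, Complex.norm_exp_I_mul_ofReal]
  have hterm (a : ℕ) : Complex.exp (((-2 * Real.pi * ξ * (((a + 1 : ℕ) : ℝ) / q) : ℝ) : ℂ) *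
      Complex.I) = z * z ^ a := by
    rw [← pow_succ', hz, ← Complex.exp_nat_mul]
    congr 1
    push_cast
    ring
  have hround : T / q ≤ |ξ / q - round (ξ / q)| := by
    rw [div_le_iff₀ hq₀]
    calc T ≤ |ξ - round (ξ / q) * q| := hξ _
      _ = |ξ / q - round (ξ / q)| * q := by
        rw [← abs_of_pos hq₀, ← abs_mul, abs_of_pos hq₀, sub_mul, div_mul_cancel₀ _ hq₀.ne']
  have hz_sub : 4 * (T / q) ≤ ‖z - 1‖ :=
    (mul_le_mul_of_nonneg_left hround zero_le_four).trans
      (four_mul_abs_sub_round_le_norm_exp_sub_one _)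
  have hz_ne : z ≠ 1 := sub_ne_zero.1 (norm_pos_iff.1 (lt_of_lt_of_le (by positivity) hz_sub))
  simp_rw [hterm]
  calc ‖∑ a ∈ Finset.range A, z * z ^ a‖ = ‖∑ a ∈ Finset.range A, z ^ a‖ := by
        rw [← Finset.mul_sum, norm_mul, hz_norm, one_mul]
    _ ≤ 2 / ‖z - 1‖ := norm_geom_sum_le_of_norm_eq_one hz_norm hz_ne A
    _ ≤ 2 / (4 * (T / q)) := by gcongr
    _ = q / (2 * T) := by field_simp; norm_num

end ExponentialSums

section RandomFraction

/-- The law of `a / q`, where `a` is uniform in `{1, …, A}`. -/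
noncomputable def fractionGrid (q A : ℕ) : Measure ℝ :=
  averageMeasure (Finset.range A) fun a ↦ Measure.dirac (((a + 1 : ℕ) : ℝ) / q)

/-- The law of `a / q`, where `q` is a uniform prime in `(N, N ^ 3]` and `a` is uniform in
`{1, …, ⌊q / l⌋ + 1}`; it lives on the fractions of size at most `2 / l`. -/
noncomputable def randomFraction (N l : ℕ) : Measure ℝ :=
  averageMeasure (primeDenominators N) fun q ↦ fractionGrid q (q / l + 1)

/-- The positive fractions of size at most `δ` that can be written with a denominator in `[2, Q]`,
not necessarily in lowest terms. -/
def smallFractions (Q : ℕ) (δ : ℝ) : Set ℝ :=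
  {x | ∃ a q : ℕ, 0 < a ∧ 1 < q ∧ q ≤ Q ∧ x = a / q ∧ x ≤ δ}

variable {N l q A : ℕ} {ξ T : ℝ}

instance isProbabilityMeasure_fractionGrid : IsProbabilityMeasure (fractionGrid q (A + 1)) :=
  isProbabilityMeasure_averageMeasure Finset.nonempty_range_add_one fun _ _ ↦ inferInstance

lemma isProbabilityMeasure_randomFraction (hN : 12 ≤ N) :
    IsProbabilityMeasure (randomFraction N l) :=
  isProbabilityMeasure_averageMeasure (primeDenominators_nonempty hN) fun _ _ ↦ inferInstance

lemma ae_randomFraction_mem_smallFractions (hl : 0 < l) (hlN : l ≤ N) :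
    ∀ᵐ x ∂randomFraction N l, x ∈ smallFractions (N ^ 3) (2 / l) := by
  refine ae_averageMeasure fun q hq ↦ ae_averageMeasure fun a ha ↦ ?_
  rw [ae_dirac_eq]
  obtain ⟨⟨hNq, hqN⟩, hq⟩ := mem_primeDenominators.1 hq
  refine ⟨a + 1, q, a.succ_pos, hq.one_lt, hqN, rfl, ?_⟩
  rw [div_le_div_iff₀ (by exact_mod_cast hq.pos) (by exact_mod_cast hl)]
  have haq : a * l ≤ q :=
    (Nat.mul_le_mul_right l (Nat.lt_succ_iff.1 (Finset.mem_range.1 ha))).trans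
      (Nat.div_mul_le_self q l)
  have : (a + 1) * l ≤ 2 * q := by linarith [hlN.trans hNq.le]
  exact_mod_cast this

lemma norm_fourierT_fractionGrid_le (hq : 0 < q) (hT : 0 < T)
    (hξ : ∀ m : ℤ, T ≤ |ξ - m * q|) (A : ℕ) :
    ‖fourierT (fractionGrid q A) ξ‖ ≤ (A : ℝ)⁻¹ * (q / (2 * T)) := by
  rw [fourierT, fractionGrid,
    integral_averageMeasure fun a _ ↦ integrable_dirac enorm_lt_top, norm_smul,
    norm_inv, RCLike.norm_natCast, Finset.card_range]
  simp_rw [integral_dirac]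
  gcongr
  exact norm_sum_exp_le hq hT hξ A

lemma norm_fourierT_fractionGrid_div_succ_le (hl : 0 < l) (hq : 0 < q) (hT : 0 < T)
    (hξ : ∀ m : ℤ, T ≤ |ξ - m * q|) :
    ‖fourierT (fractionGrid q (q / l + 1)) ξ‖ ≤ l / (2 * T) := by
  have hql : (q : ℝ) ≤ (q / l + 1 : ℕ) * l := by
    exact_mod_cast (Nat.lt_mul_div_succ q hl).le.trans_eq (mul_comm _ _)
  refine (norm_fourierT_fractionGrid_le hq hT hξ _).trans ?_
  rw [inv_mul_le_iff₀ (by positivity), ← mul_div_assoc]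
  gcongr

lemma norm_fourierT_randomFraction_le (N l : ℕ) (ξ : ℝ) :
    ‖fourierT (randomFraction N l) ξ‖ ≤ ((primeDenominators N).card : ℝ)⁻¹ *
      ∑ q ∈ primeDenominators N, ‖fourierT (fractionGrid q (q / l + 1)) ξ‖ :=
  norm_fourierT_averageMeasure_le (fun _ _ ↦ inferInstance) ξ

lemma norm_fourierT_randomFraction_le_of_le_half (hN : 12 ≤ N) (hl : 0 < l) (hξ₀ : ξ ≠ 0)
    (hξ : |ξ| ≤ N / 2) : ‖fourierT (randomFraction N l) ξ‖ ≤ l / (2 * |ξ|) := by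
  have hcard : (0 : ℝ) < (primeDenominators N).card :=
    by exact_mod_cast (primeDenominators_nonempty hN).card_pos
  refine (norm_fourierT_randomFraction_le N l ξ).trans ?_
  rw [inv_mul_le_iff₀ hcard, ← nsmul_eq_mul]
  refine Finset.sum_le_card_nsmul _ _ _ fun q hq ↦ ?_
  obtain ⟨⟨hNq, -⟩, hq⟩ := mem_primeDenominators.1 hq
  refine norm_fourierT_fractionGrid_div_succ_le hl hq.pos (abs_pos.2 hξ₀) fun m ↦ ?_
  rcases eq_or_ne m 0 with rfl | hm
  · simp
  · have hmq : (N : ℝ) ≤ |(m : ℝ) * q| := by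
      rw [abs_mul, Nat.abs_cast]
      have hm₁ : (1 : ℝ) ≤ |(m : ℝ)| := by exact_mod_cast Int.one_le_abs hm
      calc (N : ℝ) ≤ 1 * q := by rw [one_mul]; exact_mod_cast hNq.le
        _ ≤ |(m : ℝ)| * q := by gcongr
    have := abs_sub_abs_le_abs_sub ((m : ℝ) * q) ξ
    rw [abs_sub_comm] at this
    linarith

lemma norm_fourierT_randomFraction_le_of_add_le_pow (hN : 12 ≤ N) (hl : 0 < l) {s j : ℕ}
    (hs : 0 < s) (hsξ : s < |ξ|) (hξ : |ξ| + s ≤ (N : ℝ) ^ j) :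
    ‖fourierT (randomFraction N l) ξ‖ ≤ (2 * s + 1) * j / N + l / (2 * s) := by
  classical
  set P := primeDenominators N
  have hcard : (N : ℝ) ≤ P.card := by exact_mod_cast le_card_primeDenominators hN
  have hN₀ : (0 : ℝ) < N := by exact_mod_cast (by omega : 0 < N)
  have hbad : ((P.filter fun q : ℕ ↦ ∃ m : ℤ, |ξ - m * q| < s).card : ℝ) ≤ (2 * s + 1) * j := by
    exact_mod_cast card_filter_exists_abs_sub_lt_le (fun q hq ↦ (mem_primeDenominators.1 hq).2)
      (fun q hq ↦ (mem_primeDenominators.1 hq).1.1.le) (by omega) hsξ hξ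
  have hterm : ∀ q ∈ P, ‖fourierT (fractionGrid q (q / l + 1)) ξ‖ ≤
      (if ∃ m : ℤ, |ξ - m * (q : ℝ)| < s then 1 else 0) + l / (2 * s) := by
    intro q hq
    split_ifs with hnear
    · exact (norm_fourierT_le_one _ ξ).trans (le_add_of_nonneg_right (by positivity))
    · push Not at hnear
      rw [zero_add]
      exact norm_fourierT_fractionGrid_div_succ_le hl (mem_primeDenominators.1 hq).2.pos
        (by exact_mod_cast hs) hnear
  calc ‖fourierT (randomFraction N l) ξ‖
    _ ≤ (P.card : ℝ)⁻¹ * ∑ q ∈ P,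
        ((if ∃ m : ℤ, |ξ - m * (q : ℝ)| < s then 1 else 0) + (l : ℝ) / (2 * s)) :=
      (norm_fourierT_randomFraction_le N l ξ).trans (by gcongr with q hq; exact hterm q hq)
    _ = (P.filter fun q : ℕ ↦ ∃ m : ℤ, |ξ - m * q| < s).card / P.card + l / (2 * s) := by
      rw [Finset.sum_add_distrib, Finset.sum_boole, Finset.sum_const, nsmul_eq_mul, mul_add,
        inv_mul_cancel_left₀ (hN₀.trans_le hcard).ne', inv_mul_eq_div]
    _ ≤ (2 * s + 1) * j / N + l / (2 * s) := by gcongr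

end RandomFraction

section Liouville

variable {Q : ℕ → ℕ} {x : ℕ → ℝ}

lemma smallFractions_subset_Ioc (Q : ℕ) (δ : ℝ) : smallFractions Q δ ⊆ Ioc 0 δ := by
  rintro x ⟨a, q, ha, hq, -, rfl, hδ⟩
  exact ⟨div_pos (by exact_mod_cast ha) (by exact_mod_cast zero_lt_one.trans hq), hδ⟩

lemma two_le_of_mem_smallFractions {Q : ℕ} {δ x : ℝ} (hx : x ∈ smallFractions Q δ) : 2 ≤ Q := by
  obtain ⟨_, q, _, hq, hqQ, _⟩ := hx
  exact hq.trans_le hqQ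

lemma smallFractions_mono {Q : ℕ} {δ ε : ℝ} (h : δ ≤ ε) :
    smallFractions Q δ ⊆ smallFractions Q ε :=
  fun _ ⟨a, q, ha, hq, hqQ, hx, hδ⟩ ↦ ⟨a, q, ha, hq, hqQ, hx, hδ.trans h⟩

lemma exists_sum_div_eq_div_prod {ι K : Type*} [Field K] (s : Finset ι) (a : ι → ℤ)
    {q : ι → ℤ} (hq : ∀ i ∈ s, (q i : K) ≠ 0) :
    ∃ p : ℤ, ∑ i ∈ s, (a i : K) / q i = p / (∏ i ∈ s, q i : ℤ) := by
  classical
  refine ⟨∑ i ∈ s, a i * ∏ j ∈ s.erase i, q j, ?_⟩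
  push_cast
  rw [Finset.sum_div]
  refine Finset.sum_congr rfl fun i hi ↦ ?_
  have herase : ∏ j ∈ s.erase i, (q j : K) ≠ 0 :=
    Finset.prod_ne_zero_iff.2 fun j hj ↦ hq j (Finset.mem_of_mem_erase hj)
  rw [← Finset.mul_prod_erase s _ hi, mul_div_mul_right _ _ herase]

lemma exists_sum_eq_div_of_mem_smallFractions {δ : ℕ → ℝ}
    (hx : ∀ k, x k ∈ smallFractions (Q k) (δ k)) {m : ℕ} (hm : 0 < m) :
    ∃ p q : ℤ, 1 < q ∧ q ≤ ∏ i ∈ Finset.range m, Q i ∧ ∑ i ∈ Finset.range m, x i = p / q := by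
  choose a q _ hq hqQ hx _ using hx
  obtain ⟨p, hp⟩ := exists_sum_div_eq_div_prod (K := ℝ) (Finset.range m) (fun i ↦ (a i : ℤ))
    (q := fun i ↦ (q i : ℤ)) fun i _ ↦ by exact_mod_cast (zero_lt_one.trans (hq i)).ne'
  have hprod : 1 < ∏ i ∈ Finset.range m, q i := by
    calc 1 < q 0 := hq 0
      _ ≤ ∏ i ∈ Finset.range m, q i :=
        Finset.single_le_prod' (f := q) (fun i _ ↦ (hq i).le) (Finset.mem_range.2 hm)
  refine ⟨p, ∏ i ∈ Finset.range m, (q i : ℤ), by exact_mod_cast hprod, ?_, ?_⟩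
  · exact_mod_cast Finset.prod_le_prod' fun i _ ↦ hqQ i
  · rw [← hp]
    exact Finset.sum_congr rfl fun i _ ↦ by simpa using hx i

/-- The fractions admitted as `k`-th term of a Liouville series whose `i`-th denominator is at most
`Q i`: they are small compared to the `k`-th power of the common denominator `∏ i < k, Q i` of the
preceding terms. -/
def liouvilleTerms (Q : ℕ → ℕ) (k : ℕ) : Set ℝ :=
  smallFractions (Q k) ((1 / 2) ^ (k + 2) / ((∏ i ∈ Finset.range k, Q i : ℕ) : ℝ) ^ k)

lemma smallFractions_two_div_subset_liouvilleTerms (hQ : ∀ i, 0 < Q i) {k l : ℕ}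
    (hl : 2 ^ (k + 3) * (∏ i ∈ Finset.range k, Q i) ^ k ≤ l) :
    smallFractions (Q k) (2 / l) ⊆ liouvilleTerms Q k := by
  have hprod : (0 : ℝ) < ((∏ i ∈ Finset.range k, Q i : ℕ) : ℝ) := by
    exact_mod_cast Finset.prod_pos fun i _ ↦ hQ i
  refine smallFractions_mono ?_
  calc (2 : ℝ) / l ≤ 2 / (2 ^ (k + 3) * ((∏ i ∈ Finset.range k, Q i : ℕ) : ℝ) ^ k) := by
        gcongr
        exact_mod_cast hl
    _ = (1 / 2) ^ (k + 2) / ((∏ i ∈ Finset.range k, Q i : ℕ) : ℝ) ^ k := by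
        rw [one_div_pow, pow_succ _ (k + 2)]
        field_simp

lemma le_geometric_of_mem_liouvilleTerms (hx : ∀ k, x k ∈ liouvilleTerms Q k) (m i : ℕ) :
    x (i + m) ≤ 1 / 4 / ((∏ j ∈ Finset.range m, Q j : ℕ) : ℝ) ^ m * (1 / 2) ^ i := by
  have hQ (k : ℕ) : 1 ≤ Q k := one_le_two.trans (two_le_of_mem_smallFractions (hx k))
  have hprod (k : ℕ) : 1 ≤ ∏ j ∈ Finset.range k, Q j := Finset.one_le_prod' fun j _ ↦ hQ j
  have hprod_le : (∏ j ∈ Finset.range m, Q j) ^ m ≤ (∏ j ∈ Finset.range (i + m), Q j) ^ (i + m) :=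
    calc (∏ j ∈ Finset.range m, Q j) ^ m ≤ (∏ j ∈ Finset.range (i + m), Q j) ^ m :=
          Nat.pow_le_pow_left (Finset.prod_le_prod_of_subset_of_one_le'
            (Finset.range_subset_range.2 (Nat.le_add_left m i)) fun j _ _ ↦ hQ j) m
      _ ≤ _ := Nat.pow_le_pow_right (hprod _) (Nat.le_add_left m i)
  have hprod_pos : (0 : ℝ) < ((∏ j ∈ Finset.range m, Q j : ℕ) : ℝ) ^ m :=
    pow_pos (by exact_mod_cast hprod m) m
  calc x (i + m) ≤ (1 / 2) ^ (i + m + 2) / ((∏ j ∈ Finset.range (i + m), Q j : ℕ) : ℝ) ^ (i + m) :=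
        (smallFractions_subset_Ioc _ _ (hx _)).2
    _ ≤ (1 / 2) ^ (i + 2) / ((∏ j ∈ Finset.range m, Q j : ℕ) : ℝ) ^ m :=
        div_le_div₀ (by positivity)
          (pow_le_pow_of_le_one (by norm_num) (by norm_num) (by omega)) hprod_pos
          (by exact_mod_cast hprod_le)
    _ = 1 / 4 / ((∏ j ∈ Finset.range m, Q j : ℕ) : ℝ) ^ m * (1 / 2) ^ i := by ring

lemma summable_of_mem_liouvilleTerms (hx : ∀ k, x k ∈ liouvilleTerms Q k) : Summable x :=
  Summable.of_nonneg_of_le (fun k ↦ (smallFractions_subset_Ioc _ _ (hx k)).1.le)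
    (le_geometric_of_mem_liouvilleTerms hx 0) (summable_geometric_two.mul_left _)

lemma tsum_nat_add_mem_Ioo_of_mem_liouvilleTerms (hx : ∀ k, x k ∈ liouvilleTerms Q k) (m : ℕ) :
    ∑' i, x (i + m) ∈ Ioo 0 (1 / ((∏ i ∈ Finset.range m, Q i : ℕ) : ℝ) ^ m) := by
  have hpos (k : ℕ) : 0 < x k := (smallFractions_subset_Ioc _ _ (hx k)).1
  have hsum : Summable fun i ↦ x (i + m) :=
    (summable_nat_add_iff m).2 (summable_of_mem_liouvilleTerms hx)
  have hprod : 0 < ∏ i ∈ Finset.range m, Q i :=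
    Finset.prod_pos fun i _ ↦ zero_lt_two.trans_le (two_le_of_mem_smallFractions (hx i))
  refine ⟨hsum.tsum_pos (fun i ↦ (hpos _).le) 0 (hpos _), ?_⟩
  calc ∑' i, x (i + m)
    _ ≤ ∑' i : ℕ, 1 / 4 / ((∏ j ∈ Finset.range m, Q j : ℕ) : ℝ) ^ m * (1 / 2) ^ i :=
      hsum.tsum_le_tsum (le_geometric_of_mem_liouvilleTerms hx m)
        (summable_geometric_two.mul_left _)
    _ = 1 / 2 * (1 / ((∏ j ∈ Finset.range m, Q j : ℕ) : ℝ) ^ m) := by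
      rw [tsum_mul_left, tsum_geometric_two]
      ring
    _ < 1 / ((∏ j ∈ Finset.range m, Q j : ℕ) : ℝ) ^ m :=
      mul_lt_of_lt_one_left (by positivity) one_half_lt_one

lemma liouville_tsum_of_mem_liouvilleTerms (hx : ∀ k, x k ∈ liouvilleTerms Q k) :
    Liouville (∑' k, x k) := by
  intro n
  obtain ⟨p, q, hq, hqQ, hpq⟩ := exists_sum_eq_div_of_mem_smallFractions hx n.succ_pos
  obtain ⟨htail_pos, htail_lt⟩ := tsum_nat_add_mem_Ioo_of_mem_liouvilleTerms hx (n + 1)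
  have hdiff : ∑' k, x k - p / q = ∑' i, x (i + (n + 1)) := by
    rw [← (summable_of_mem_liouvilleTerms hx).sum_add_tsum_nat_add (n + 1), hpq,
      add_sub_cancel_left]
  refine ⟨p, q, hq, sub_ne_zero.1 (hdiff ▸ htail_pos.ne'), ?_⟩
  rw [hdiff, abs_of_pos htail_pos]
  refine htail_lt.trans_le (one_div_le_one_div_of_le (by positivity) ?_)
  have hq₁ : (1 : ℝ) ≤ q := by exact_mod_cast hq.le
  calc (q : ℝ) ^ n ≤ q ^ (n + 1) := pow_le_pow_right₀ hq₁ n.le_succ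
    _ ≤ ((∏ i ∈ Finset.range (n + 1), Q i : ℕ) : ℝ) ^ (n + 1) := by
      gcongr
      exact_mod_cast hqQ

end Liouville

section Scales

variable {g : ℝ → ℝ} {l r J k L E N : ℕ} {ξ : ℝ}

lemma DominatesNegRpow.eventually_norm_fourierT_randomFraction_le_of_le_half
    (hg : DominatesNegRpow g) : ∀ᶠ l : ℕ in atTop, ∀ N : ℕ, 12 ≤ N → ∀ ξ : ℝ,
      (l : ℝ) ^ 2 ≤ |ξ| → |ξ| ≤ N / 2 → ‖fourierT (randomFraction N l) ξ‖ ≤ g |ξ| := by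
  have hsq : Tendsto (fun l : ℕ ↦ (l : ℝ) ^ 2) atTop atTop :=
    (tendsto_pow_atTop two_ne_zero).comp tendsto_natCast_atTop_atTop
  filter_upwards [eventually_gt_atTop 0,
    hsq.eventually (eventually_forall_ge_atTop.2 (hg (1 / 2) one_half_pos))]
    with l hl hgl N hN ξ hlξ hξN
  have hξ : 0 < |ξ| := lt_of_lt_of_le (by positivity) hlξ
  refine (norm_fourierT_randomFraction_le_of_le_half hN hl (abs_pos.1 hξ) hξN).trans
    (le_trans ?_ (hgl |ξ| hlξ))
  calc (l : ℝ) / (2 * |ξ|) ≤ √|ξ| / |ξ| := by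
        gcongr
        · exact Real.le_sqrt_of_sq_le hlξ
        · linarith
    _ = |ξ| ^ (-(1 / 2) : ℝ) := by
        rw [Real.sqrt_div_self', Real.rpow_neg hξ.le, ← Real.sqrt_eq_rpow, one_div]

lemma norm_fourierT_randomFraction_pow_four_le (hl : 0 < l) (hr : 3 * (J + 1) + l ≤ r)
    (hrξ : (r : ℝ) ^ 4 / 2 ≤ |ξ|) (hξr : |ξ| ≤ ((r : ℝ) ^ 4) ^ J) :
    ‖fourierT (randomFraction (r ^ 4) l) ξ‖ ≤ (r : ℝ)⁻¹ := by
  have hr₂ : (2 : ℝ) ≤ r := by exact_mod_cast (by omega : 2 ≤ r)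
  have hr_sq : (4 : ℝ) ≤ (r : ℝ) ^ 2 := by nlinarith
  have hr_four : 1 + (r : ℝ) ^ 2 ≤ r ^ 4 := by nlinarith
  have hN : 12 ≤ r ^ 4 := by
    calc 12 ≤ 2 ^ 4 := by norm_num
      _ ≤ r ^ 4 := Nat.pow_le_pow_left (by omega) 4
  have hJ : (1 : ℝ) ≤ ((r : ℝ) ^ 4) ^ J := one_le_pow₀ (by nlinarith)
  have hrξ_lt : ((r ^ 2 : ℕ) : ℝ) < |ξ| := by push_cast; nlinarith
  have hξ_add : |ξ| + (r ^ 2 : ℕ) ≤ ((r ^ 4 : ℕ) : ℝ) ^ (J + 1) := by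
    push_cast
    calc |ξ| + (r : ℝ) ^ 2 ≤ ((r : ℝ) ^ 4) ^ J + ((r : ℝ) ^ 4) ^ J * r ^ 2 :=
          add_le_add hξr (le_mul_of_one_le_left (by positivity) hJ)
      _ = ((r : ℝ) ^ 4) ^ J * (1 + r ^ 2) := by ring
      _ ≤ ((r : ℝ) ^ 4) ^ J * r ^ 4 := by gcongr
      _ = ((r : ℝ) ^ 4) ^ (J + 1) := (pow_succ _ J).symm
  have hbound := norm_fourierT_randomFraction_le_of_add_le_pow hN hl (pow_pos (by omega) 2)
    hrξ_lt hξ_add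
  push_cast at hbound
  calc ‖fourierT (randomFraction (r ^ 4) l) ξ‖
    _ ≤ (2 * (r : ℝ) ^ 2 + 1) * (J + 1) / r ^ 4 + l / (2 * r ^ 2) := hbound
    _ ≤ (3 * (r : ℝ) ^ 2) * (J + 1) / r ^ 4 + l / r ^ 2 := by gcongr <;> linarith
    _ = (3 * (J + 1) + l : ℕ) / (r : ℝ) ^ 2 := by push_cast; field_simp
    _ ≤ r / (r : ℝ) ^ 2 := by gcongr
    _ = (r : ℝ)⁻¹ := by field_simp

lemma DominatesNegRpow.eventually_norm_fourierT_randomFraction_pow_four_le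
    (hg : DominatesNegRpow g) (hl : 0 < l) (J : ℕ) : ∀ᶠ r : ℕ in atTop, ∀ ξ : ℝ,
      (r : ℝ) ^ 4 / 2 ≤ |ξ| → |ξ| ≤ ((r : ℝ) ^ 4) ^ J →
        ‖fourierT (randomFraction (r ^ 4) l) ξ‖ ≤ g |ξ| := by
  have hα : (0 : ℝ) < 1 / (4 * (J + 1)) := by positivity
  have htendsto : Tendsto (fun r : ℕ ↦ (r : ℝ) ^ 4 / 2) atTop atTop :=
    ((tendsto_pow_atTop four_ne_zero).comp tendsto_natCast_atTop_atTop).atTop_div_const two_pos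
  filter_upwards [eventually_ge_atTop (3 * (J + 1) + l),
    htendsto.eventually (eventually_forall_ge_atTop.2 (hg _ hα))] with r hr hgr ξ hrξ hξr
  have hr₁ : (1 : ℝ) ≤ r := by exact_mod_cast (by omega : 1 ≤ r)
  have hξ : 0 < |ξ| := lt_of_lt_of_le (by positivity) hrξ
  have hξ_le : |ξ| ≤ (r : ℝ) ^ (4 * (J + 1)) := by
    calc |ξ| ≤ ((r : ℝ) ^ 4) ^ J := hξr
      _ ≤ ((r : ℝ) ^ 4) ^ (J + 1) := pow_le_pow_right₀ (one_le_pow₀ hr₁) J.le_succ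
      _ = (r : ℝ) ^ (4 * (J + 1)) := (pow_mul _ _ _).symm
  calc ‖fourierT (randomFraction (r ^ 4) l) ξ‖ ≤ (r : ℝ)⁻¹ :=
        norm_fourierT_randomFraction_pow_four_le hl hr hrξ hξr
    _ = ((r : ℝ) ^ (4 * (J + 1))) ^ (-(1 / (4 * (J + 1))) : ℝ) := by
        rw [← Real.rpow_natCast, ← Real.rpow_mul (by positivity), ← Real.rpow_neg_one]
        push_cast
        congr 1
        field_simp
    _ ≤ |ξ| ^ (-(1 / (4 * (J + 1))) : ℝ) :=
        Real.rpow_le_rpow_of_nonpos hξ hξ_le (neg_nonpos.2 hα.le)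
    _ ≤ g |ξ| := hgr |ξ| hrξ

/-- The `k`-th random fraction has size at most `2 / fractionScale L k E`, where `E` is the product
of the bounds on the previous denominators. The factor `E ^ k` makes the tail of the series small
compared to the `k`-th power of the common denominator of the preceding partial sum. -/
def fractionScale (L k E : ℕ) : ℕ := L + 2 ^ (k + 3) * E ^ k

lemma fractionScale_succ_sq_le_pow (hE : E ≤ N) (hL : L + 2 ^ (k + 4) ≤ N) (hN : 0 < N) :
    fractionScale L (k + 1) (E * N ^ 3) ^ 2 ≤ N ^ (8 * k + 10) := by
  have hscale : fractionScale L (k + 1) (E * N ^ 3) ≤ N ^ (4 * k + 5) := by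
    calc L + 2 ^ (k + 4) * (E * N ^ 3) ^ (k + 1)
      _ ≤ L * N ^ (4 * (k + 1)) + 2 ^ (k + 4) * (N * N ^ 3) ^ (k + 1) := by
        gcongr
        exact Nat.le_mul_of_pos_right L (by positivity)
      _ = (L + 2 ^ (k + 4)) * N ^ (4 * (k + 1)) := by ring
      _ ≤ N * N ^ (4 * (k + 1)) := by gcongr
      _ = N ^ (4 * k + 5) := by ring
  calc fractionScale L (k + 1) (E * N ^ 3) ^ 2 ≤ (N ^ (4 * k + 5)) ^ 2 := by gcongr
    _ = N ^ (8 * k + 10) := by ring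

lemma DominatesNegRpow.exists_forall_exists_scale (hg : DominatesNegRpow g) :
    ∃ L : ℕ, ∀ k E : ℕ, ∃ N ≥ 12, fractionScale L k E ≤ N ∧
      ∀ ξ : ℝ, (fractionScale L k E : ℝ) ^ 2 ≤ |ξ| →
        |ξ| ≤ (fractionScale L (k + 1) (E * N ^ 3) : ℝ) ^ 2 →
          ‖fourierT (randomFraction N (fractionScale L k E)) ξ‖ ≤ g |ξ| := by
  obtain ⟨L, hL, hlow⟩ := ((eventually_gt_atTop 0).and (eventually_forall_ge_atTop.2
    hg.eventually_norm_fourierT_randomFraction_le_of_le_half)).exists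
  refine ⟨L, fun k E ↦ ?_⟩
  have hLl : L ≤ fractionScale L k E := Nat.le_add_right _ _
  obtain ⟨r, hmid, hr⟩ := ((hg.eventually_norm_fourierT_randomFraction_pow_four_le
    (hL.trans_le hLl) (8 * k + 10)).and (eventually_ge_atTop
      (12 + fractionScale L k E + E + (L + 2 ^ (k + 4))))).exists
  have hrN : r ≤ r ^ 4 := Nat.le_self_pow four_ne_zero r
  have hpow : 0 < 2 ^ (k + 4) := by positivity
  have hN : 12 ≤ r ^ 4 := by omega
  refine ⟨r ^ 4, hN, by omega, fun ξ hξ hξ' ↦ ?_⟩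
  rcases le_total |ξ| (((r ^ 4 : ℕ) : ℝ) / 2) with hle | hge
  · exact hlow _ hLl _ hN ξ hξ hle
  · push_cast at hge
    refine hmid ξ hge (hξ'.trans ?_)
    exact_mod_cast fractionScale_succ_sq_le_pow (k := k) (by omega : E ≤ r ^ 4) (by omega)
      (by omega)

lemma exists_seq_forall_prod_range {α M : Type*} [CommMonoid M] (f : α → M)
    {p : ℕ → M → α → Prop} (hp : ∀ k e, ∃ a, p k e a) :
    ∃ u : ℕ → α, ∀ k, p k (∏ i ∈ Finset.range k, f (u i)) (u k) := by
  choose Φ hΦ using hp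
  let e (k : ℕ) : M := Nat.rec 1 (fun k e ↦ e * f (Φ k e)) k
  have he (k : ℕ) : ∏ i ∈ Finset.range k, f (Φ i (e i)) = e k := by
    induction k with
    | zero => rfl
    | succ k ih => rw [Finset.prod_range_succ, ih]
  exact ⟨fun k ↦ Φ k (e k), fun k ↦ he k ▸ hΦ k (e k)⟩

lemma DominatesNegRpow.exists_scales (hg : DominatesNegRpow g) :
    ∃ l N : ℕ → ℕ, ∀ k, 12 ≤ N k ∧ l k ≤ N k ∧
      2 ^ (k + 3) * (∏ i ∈ Finset.range k, N i ^ 3) ^ k ≤ l k ∧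
      ∀ ξ : ℝ, (l k : ℝ) ^ 2 ≤ |ξ| → |ξ| ≤ (l (k + 1) : ℝ) ^ 2 →
        ‖fourierT (randomFraction (N k) (l k)) ξ‖ ≤ g |ξ| := by
  obtain ⟨L, hstep⟩ := hg.exists_forall_exists_scale
  obtain ⟨N, hN⟩ := exists_seq_forall_prod_range (fun N ↦ N ^ 3) hstep
  refine ⟨fun k ↦ fractionScale L k (∏ i ∈ Finset.range k, N i ^ 3), N, fun k ↦ ?_⟩
  obtain ⟨hN₁₂, hlN, hbound⟩ := hN k
  exact ⟨hN₁₂, hlN, Nat.le_add_left _ _, by simpa only [Finset.prod_range_succ] using hbound⟩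

lemma exists_mem_Ico_of_tendsto_atTop {α : Type*} [LinearOrder α] [NoMaxOrder α] {f : ℕ → α}
    {x : α} (hf : Tendsto f atTop atTop) (hx : f 0 ≤ x) : ∃ k, x ∈ Ico (f k) (f (k + 1)) := by
  by_contra! hnot
  have hle (k : ℕ) : f k ≤ x := by
    induction k with
    | zero => exact hx
    | succ k ih => exact not_lt.1 fun hlt ↦ hnot k ⟨ih, hlt⟩
  obtain ⟨k, hk⟩ := (hf.eventually (eventually_gt_atTop x)).exists
  exact (hle k).not_gt hk

lemma lt_of_two_pow_mul_pow_le {k E l : ℕ} (hE : 0 < E) (h : 2 ^ (k + 3) * E ^ k ≤ l) : k < l :=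
  calc k < 2 ^ (k + 3) := Nat.lt_two_pow_self.trans_le (Nat.pow_le_pow_right two_pos (by omega))
    _ ≤ 2 ^ (k + 3) * E ^ k := Nat.le_mul_of_pos_right _ (pow_pos hE k)
    _ ≤ l := h

end Scales

theorem exists_measure_liouville_norm_fourierT_le_randomFraction {l N : ℕ → ℕ}
    (hN : ∀ k, 12 ≤ N k) (hlN : ∀ k, l k ≤ N k)
    (hl_large : ∀ k, 2 ^ (k + 3) * (∏ i ∈ Finset.range k, N i ^ 3) ^ k ≤ l k) :
    ∃ μ : Measure ℝ, IsProbabilityMeasure μ ∧ μ {x : ℝ | Liouville x}ᶜ = 0 ∧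
      ∀ k ξ, ‖fourierT μ ξ‖ ≤ ‖fourierT (randomFraction (N k) (l k)) ξ‖ := by
  have (k : ℕ) : IsProbabilityMeasure (randomFraction (N k) (l k)) :=
    isProbabilityMeasure_randomFraction (hN k)
  have hN_pos (k : ℕ) : 0 < N k ^ 3 := pow_pos ((by norm_num : 0 < 12).trans_le (hN k)) 3
  have hl (k : ℕ) : 0 < l k := k.zero_le.trans_lt <|
    lt_of_two_pow_mul_pow_le (Finset.prod_pos fun i _ ↦ hN_pos i) (hl_large k)
  obtain ⟨μ, hμ, hμL, hμ_le⟩ := exists_ae_mem_forall_norm_charFun_le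
    (fun k ↦ randomFraction (N k) (l k))
    (fun k ↦ (ae_randomFraction_mem_smallFractions (hl k) (hlN k)).mono fun _ hx ↦
      smallFractions_two_div_subset_liouvilleTerms hN_pos (hl_large k) hx)
    (T := {x | Liouville x}) IsGδ.setOfPred_liouville.measurableSet
    fun x hx ↦ ⟨summable_of_mem_liouvilleTerms hx, liouville_tsum_of_mem_liouvilleTerms hx⟩
  exact ⟨μ, hμ, hμL, fun k ξ ↦ by simpa only [fourierT_eq_charFun] using hμ_le k _⟩

theorem DominatesNegRpow.exists_measure_liouville_norm_fourierT_le {g : ℝ → ℝ}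
    (hg : DominatesNegRpow g) :
    ∃ μ : Measure ℝ, IsProbabilityMeasure μ ∧ μ {x : ℝ | Liouville x}ᶜ = 0 ∧
      ∃ M > (0 : ℝ), ∀ ξ : ℝ, M ≤ |ξ| → ‖fourierT μ ξ‖ ≤ g |ξ| := by
  obtain ⟨l, N, h⟩ := hg.exists_scales
  choose hN hlN hl_large hbound using h
  have hkl (k : ℕ) : k < l k := lt_of_two_pow_mul_pow_le
    (Finset.prod_pos fun i _ ↦ pow_pos ((by norm_num : 0 < 12).trans_le (hN i)) 3) (hl_large k)
  obtain ⟨μ, hμ, hμL, hμ_le⟩ :=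
    exists_measure_liouville_norm_fourierT_le_randomFraction hN hlN hl_large
  have hl_tendsto : Tendsto (fun k ↦ (l k : ℝ) ^ 2) atTop atTop :=
    (tendsto_pow_atTop two_ne_zero).comp
      (tendsto_natCast_atTop_atTop.comp (tendsto_atTop_mono (fun k ↦ (hkl k).le) tendsto_id))
  refine ⟨μ, hμ, hμL, (l 0 : ℝ) ^ 2, pow_pos (by exact_mod_cast hkl 0) 2, fun ξ hξ ↦ ?_⟩
  obtain ⟨k, hk, hk'⟩ := exists_mem_Ico_of_tendsto_atTop hl_tendsto hξ
  exact (hμ_le k ξ).trans (hbound k ξ hk hk'.le)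

theorem stmt2_general (f : ℝ → ℝ)
    (hdecay : ∀ α > (0 : ℝ), ∀ ε > (0 : ℝ), ∃ M > (0 : ℝ),
      ∀ ξ, M ≤ ξ → ξ ^ (-α) ≤ ε * f ξ) (n : ℕ) :
    (∀ α > (0 : ℝ), ∀ ε > (0 : ℝ), ∃ M > (0 : ℝ),
        ∀ ξ, M ≤ ξ → ξ ^ (-α) ≤ ε * (f ξ) ^ n) ∧
      ∃ μ : Measure ℝ, IsProbabilityMeasure μ ∧ μ {x : ℝ | Liouville x}ᶜ = 0 ∧
        ∃ C > (0 : ℝ), ∃ M' > (0 : ℝ),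
          ∀ ξ : ℝ, M' ≤ |ξ| → ‖fourierT μ ξ‖ ≤ C * (f |ξ|) ^ n := by
  have hfn : DominatesNegRpow fun ξ ↦ f ξ ^ n := (dominatesNegRpow_iff.2 hdecay).pow n
  obtain ⟨μ, hμ, hμL, M', hM', hbound⟩ := hfn.exists_measure_liouville_norm_fourierT_le
  exact ⟨dominatesNegRpow_iff.1 hfn, μ, hμ, hμL, 1, one_pos, M', hM', by
    simpa only [one_mul] using hbound⟩

theorem stmt2 (f : ℝ → ℝ)
    (hf_nonneg : ∀ ξ, 0 ≤ ξ → 0 ≤ f ξ)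
    (hf_bdd : ∃ B : ℝ, ∀ ξ, 0 ≤ ξ → f ξ ≤ B)
    (hf_reg : AntitoneOn f (Ici 0) ∨ ContinuousOn f (Ici 0))
    (hdecay : ∀ α > (0 : ℝ), ∀ ε > (0 : ℝ), ∃ M > (0 : ℝ),
      ∀ ξ, M ≤ ξ → ξ ^ (-α) ≤ ε * f ξ) :
    ∀ n : ℕ, 1 ≤ n →
      (∀ α > (0 : ℝ), ∀ ε > (0 : ℝ), ∃ M > (0 : ℝ),
        ∀ ξ, M ≤ ξ → ξ ^ (-α) ≤ ε * (f ξ) ^ n) ∧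
      ∃ μ : Measure ℝ, IsProbabilityMeasure μ ∧ μ {x : ℝ | Liouville x}ᶜ = 0 ∧
        ∃ C > (0 : ℝ), ∃ M' > (0 : ℝ),
          ∀ ξ : ℝ, M' ≤ |ξ| → ‖fourierT μ ξ‖ ≤ C * (f |ξ|) ^ n :=
  fun n _ ↦ stmt2_general f hdecay n
end

section
/- Let f : [0,∞) → ℝ satisfy 0 < f(ξ) < 1/2 for all ξ, and suppose there exists ξ₀ > 0 such that f(ξ^λ) ≥ f(ξ)^λ for all ξ ≥ ξ₀ and all λ ≥ 1. Then exactly one of the following holds: (a) for every α > 0 and every ε > 0 there exists M > 0 with ξ^(−α) ≤ ε·f(ξ) for all ξ ≥ M; or (b) there exist α₀ > 0, c > 0, M > 0 with c·f(ξ) ≤ ξ^(−α₀) for all ξ ≥ M. -/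
open Filter Set

/-! On a logarithmic scale, `f (ξ ^ lam) ≥ f ξ ^ lam` says that `τ ξ = -log (f ξ) / log ξ` is
antitone. Hence once the graph of `f` lies above `ξ ^ (-β)` at a single large point, it stays above
it forever. So for each `β`, eventually `f ξ ≥ ξ ^ (-β)` or eventually `f ξ < ξ ^ (-β)`. If the
first holds for all `β > 0`, comparing with the exponent `β / 2` gives slow decay; otherwise the
second holds for some `β > 0`, which is fast decay. -/

open Asymptotics

theorem eventually_atTop_iff_exists_gt {ι : Type*} [Preorder ι] [IsDirectedOrder ι] [NoMaxOrder ι]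
    (a : ι) {p : ι → Prop} : (∀ᶠ x in atTop, p x) ↔ ∃ M > a, ∀ x, M ≤ x → p x := by
  have : Nonempty ι := ⟨a⟩
  refine ⟨fun h => ?_, fun ⟨M, _, hM⟩ => eventually_atTop.2 ⟨M, hM⟩⟩
  exact ((eventually_gt_atTop a).and (eventually_forall_ge_atTop.2 h)).exists

theorem isLittleO_rpow_rpow_atTop {a b : ℝ} (hab : a < b) :
    (fun x : ℝ => x ^ a) =o[atTop] fun x => x ^ b := by
  have hratio : (fun x : ℝ => x ^ (-(b - a))) =o[atTop] fun _ => (1 : ℝ) :=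
    (isLittleO_one_iff ℝ).2 (tendsto_rpow_neg_atTop (sub_pos.2 hab))
  refine (hratio.mul_isBigO (isBigO_refl (fun x : ℝ => x ^ b) atTop)).congr' ?_ ?_
  · filter_upwards [eventually_gt_atTop 0] with x hx
    rw [← Real.rpow_add hx, neg_sub, sub_add_cancel]
  · exact .of_forall fun x => one_mul _

/-- Slow decay at `+∞`: `f` dominates every negative power of `ξ`. -/
def SlowDecay (f : ℝ → ℝ) : Prop :=
  ∀ α > (0 : ℝ), (fun ξ : ℝ => ξ ^ (-α)) =o[atTop] f

/-- Fast decay at `+∞`: `f` is bounded by a constant multiple of some negative power of `ξ`. -/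
def FastDecay (f : ℝ → ℝ) : Prop :=
  ∃ α > (0 : ℝ), f =O[atTop] fun ξ : ℝ => ξ ^ (-α)

section

variable {f : ℝ → ℝ}

theorem slowDecay_iff (hf : ∀ᶠ ξ in atTop, 0 ≤ f ξ) :
    SlowDecay f ↔ ∀ α > (0 : ℝ), ∀ ε > (0 : ℝ), ∃ M > (0 : ℝ),
      ∀ ξ, M ≤ ξ → ξ ^ (-α) ≤ ε * f ξ := by
  simp only [SlowDecay, isLittleO_iff, ← eventually_atTop_iff_exists_gt]
  refine forall₄_congr fun α _ ε _ => eventually_congr ?_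
  filter_upwards [hf, eventually_ge_atTop 0] with ξ hfξ hξ
  rw [Real.norm_of_nonneg (Real.rpow_nonneg hξ _), Real.norm_of_nonneg hfξ]

theorem fastDecay_iff (hf : ∀ᶠ ξ in atTop, 0 ≤ f ξ) :
    FastDecay f ↔ ∃ α₀ > (0 : ℝ), ∃ c > (0 : ℝ), ∃ M > (0 : ℝ),
      ∀ ξ, M ≤ ξ → c * f ξ ≤ ξ ^ (-α₀) := by
  simp only [FastDecay, isBigO_iff'', ← eventually_atTop_iff_exists_gt]
  refine exists_congr fun α => and_congr_right fun _ => exists_congr fun c =>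
    and_congr_right fun _ => eventually_congr ?_
  filter_upwards [hf, eventually_ge_atTop 0] with ξ hfξ hξ
  rw [Real.norm_of_nonneg (Real.rpow_nonneg hξ _), Real.norm_of_nonneg hfξ]

theorem SlowDecay.not_fastDecay (hslow : SlowDecay f) : ¬ FastDecay f := by
  rintro ⟨α, hα, hfast⟩
  have hne : ∀ᶠ ξ : ℝ in atTop, ξ ^ (-α) ≠ 0 :=
    (eventually_gt_atTop 0).mono fun ξ hξ => (Real.rpow_pos_of_pos hξ _).ne'
  exact (hslow α hα).not_isBigO hne.frequently hfast

theorem slowDecay_of_forall_eventually_rpow_le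
    (h : ∀ α > (0 : ℝ), ∀ᶠ ξ in atTop, ξ ^ (-α) ≤ f ξ) : SlowDecay f := by
  intro α hα
  have hhalf : (fun ξ : ℝ => ξ ^ (-(α / 2))) =O[atTop] f := by
    refine IsBigO.of_norm_right (.of_norm_eventuallyLE ?_)
    filter_upwards [h (α / 2) (half_pos hα), eventually_ge_atTop 0] with ξ hle hξ
    rw [Real.norm_of_nonneg (Real.rpow_nonneg hξ _)]
    exact hle.trans (le_abs_self _)
  exact (isLittleO_rpow_rpow_atTop (neg_lt_neg (half_lt_self hα))).trans_isBigO hhalf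

theorem rpow_le_apply_of_rpow_le_apply {η ξ a : ℝ} (hη : 1 < η)
    (hsub : ∀ lam : ℝ, 1 ≤ lam → f η ^ lam ≤ f (η ^ lam))
    (hfη : η ^ a ≤ f η) (hηξ : η ≤ ξ) : ξ ^ a ≤ f ξ := by
  have hη₀ : 0 < η := one_pos.trans hη
  have hξ₀ : 0 < ξ := hη₀.trans_le hηξ
  obtain ⟨lam, hlam, rfl⟩ : ∃ lam : ℝ, 1 ≤ lam ∧ η ^ lam = ξ :=
    ⟨Real.logb η ξ, (Real.le_logb_iff_rpow_le hη hξ₀).2 (by rwa [Real.rpow_one]),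
      Real.rpow_logb hη₀ hη.ne' hξ₀⟩
  calc (η ^ lam) ^ a = (η ^ a) ^ lam := by
        rw [← Real.rpow_mul hη₀.le, mul_comm, Real.rpow_mul hη₀.le]
    _ ≤ f η ^ lam :=
        Real.rpow_le_rpow (Real.rpow_nonneg hη₀.le a) hfη (zero_le_one.trans hlam)
    _ ≤ f (η ^ lam) := hsub lam hlam

theorem eventually_rpow_le_or_eventually_lt_rpow
    (hsub : ∀ᶠ ξ in atTop, ∀ lam : ℝ, 1 ≤ lam → f ξ ^ lam ≤ f (ξ ^ lam)) (a : ℝ) :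
    (∀ᶠ ξ in atTop, ξ ^ a ≤ f ξ) ∨ ∀ᶠ ξ in atTop, f ξ < ξ ^ a := by
  by_cases hfreq : ∃ᶠ ξ in atTop, ξ ^ a ≤ f ξ
  · obtain ⟨η, hfη, hsubη, hη⟩ := (hfreq.and_eventually (hsub.and (eventually_gt_atTop 1))).exists
    exact .inl ((eventually_ge_atTop η).mono fun ξ =>
      rpow_le_apply_of_rpow_le_apply hη hsubη hfη)
  · exact .inr ((not_frequently.1 hfreq).mono fun ξ => lt_of_not_ge)

theorem slowDecay_or_fastDecay (hf : ∀ᶠ ξ in atTop, 0 ≤ f ξ)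
    (hsub : ∀ᶠ ξ in atTop, ∀ lam : ℝ, 1 ≤ lam → f ξ ^ lam ≤ f (ξ ^ lam)) :
    SlowDecay f ∨ FastDecay f := by
  by_cases hbelow : ∃ α > (0 : ℝ), ∀ᶠ ξ in atTop, f ξ < ξ ^ (-α)
  · obtain ⟨α, hα, hlt⟩ := hbelow
    refine .inr ⟨α, hα, .of_norm_eventuallyLE ?_⟩
    filter_upwards [hf, hlt] with ξ hfξ hltξ
    rw [Real.norm_of_nonneg hfξ]
    exact hltξ.le
  · refine .inl (slowDecay_of_forall_eventually_rpow_le fun α hα => ?_)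
    exact (eventually_rpow_le_or_eventually_lt_rpow hsub (-α)).resolve_right
      fun hlt => hbelow ⟨α, hα, hlt⟩

theorem stmt9_general (hf : ∀ᶠ ξ in atTop, 0 ≤ f ξ)
    (hsub : ∀ᶠ ξ in atTop, ∀ lam : ℝ, 1 ≤ lam → f ξ ^ lam ≤ f (ξ ^ lam)) :
    Xor (SlowDecay f) (FastDecay f) :=
  (xor_iff_or_and_not_and _ _).2
    ⟨slowDecay_or_fastDecay hf hsub, fun ⟨hslow, hfast⟩ => hslow.not_fastDecay hfast⟩

end

theorem stmt9 (f : ℝ → ℝ)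
    (hf : ∀ ξ, 0 ≤ ξ → 0 < f ξ ∧ f ξ < 1 / 2)
    (hsub : ∃ ξ₀ > (0 : ℝ), ∀ ξ, ξ₀ ≤ ξ → ∀ lam : ℝ, 1 ≤ lam →
      (f ξ) ^ lam ≤ f (ξ ^ lam)) :
    ((∀ α > (0 : ℝ), ∀ ε > (0 : ℝ), ∃ M > (0 : ℝ),
        ∀ ξ, M ≤ ξ → ξ ^ (-α) ≤ ε * f ξ) ∨
     (∃ α₀ > (0 : ℝ), ∃ c > (0 : ℝ), ∃ M > (0 : ℝ),
        ∀ ξ, M ≤ ξ → c * f ξ ≤ ξ ^ (-α₀))) ∧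
    ¬ ((∀ α > (0 : ℝ), ∀ ε > (0 : ℝ), ∃ M > (0 : ℝ),
        ∀ ξ, M ≤ ξ → ξ ^ (-α) ≤ ε * f ξ) ∧
       (∃ α₀ > (0 : ℝ), ∃ c > (0 : ℝ), ∃ M > (0 : ℝ),
        ∀ ξ, M ≤ ξ → c * f ξ ≤ ξ ^ (-α₀))) := by
  have hnonneg : ∀ᶠ ξ in atTop, 0 ≤ f ξ := (eventually_ge_atTop 0).mono fun ξ hξ => (hf ξ hξ).1.le
  simpa only [slowDecay_iff hnonneg, fastDecay_iff hnonneg, xor_iff_or_and_not_and] using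
    stmt9_general hnonneg ((eventually_atTop_iff_exists_gt 0).2 hsub)
end
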